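/- arXiv:1604.06078 — 2 statements merged into one kernel-verified Lean document; each statement's English description precedes it below -/
import Mathlib

section
/- Let $G_2$ be holomorphic on the annulus $\{r < |z| < 1\}$ with $0 < r \le 1/4$ and Laurent coefficients $a_n$. For any $\lambda > 1$ with $\lambda r < \lambda^{-1}$, the $L^2$ norm on the smaller annulus satisfies $\|G_2\|^2_{L^2(B_{\lambda^{-1}} \setminus B_{\lambda r})} \le C |a_{-1}|^2 |\ln r| + C \lambda^{-2} \|G_2\|^2_{L^2(B_1 \setminus B_r)}$ for a universal constant $C$. -/
open MeasureTheory Metric Set ENNReal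

lemma aux_parseval (c : ℤ → ℂ) (hc : Summable (fun n => ‖c n‖)) (F : ℝ → ℂ)
    (hF : ∀ θ : ℝ, HasSum (fun n : ℤ => c n * Complex.exp (n * θ * Complex.I)) (F θ)) :
    ∫⁻ θ in Ioo (-Real.pi) Real.pi, ENNReal.ofReal (‖F θ‖ ^ 2) =
      ∑' n : ℤ, ENNReal.ofReal (2 * Real.pi * ‖c n‖ ^ 2) := by
  have : Fact (0 < 2 * Real.pi) := ⟨Real.two_pi_pos⟩
  have hs : Summable (fun n : ℤ => c n • (fourier n : C(AddCircle (2 * Real.pi), ℂ))) := by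
    apply Summable.of_norm
    simpa [norm_smul, fourier_norm] using hc
  obtain ⟨f, hf⟩ := hs
  have hfF : ∀ θ : ℝ, f (θ : AddCircle (2 * Real.pi)) = F θ := by
    intro θ
    have h1 := (ContinuousMap.evalCLM ℂ (θ : AddCircle (2 * Real.pi))).hasSum hf
    have h2 := hF θ
    refine h1.unique ?_
    convert h2 using 2 with n
    simp only [ContinuousMap.evalCLM_apply, Function.comp, ContinuousMap.smul_apply, smul_eq_mul,
      fourier_coe_apply]
    congr 2
    have : (Real.pi : ℂ) ≠ 0 := by exact_mod_cast Real.pi_ne_zero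
    push_cast
    field_simp
  have hL := (ContinuousMap.toLp (E := ℂ) 2 (AddCircle.haarAddCircle (T := 2 * Real.pi)) ℂ).hasSum hf
  have hco : ∀ i, fourierCoeff (ContinuousMap.toLp (E := ℂ) 2 (AddCircle.haarAddCircle (T := 2 * Real.pi)) ℂ f) i = c i := by
    intro i
    rw [← fourierBasis_repr, HilbertBasis.repr_apply_apply]
    have h3 := (innerSL ℂ (fourierBasis (T := 2 * Real.pi) i)).hasSum hL
    refine h3.unique ?_
    have ho := orthonormal_iff_ite.1 (fourierBasis (T := 2 * Real.pi)).orthonormal i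
    refine Eq.mp (congrArg (fun g => HasSum g (c i)) (funext fun n => ?_)) (hasSum_ite_eq i (c i))
    symm
    have : (ContinuousMap.toLp (E := ℂ) 2 (AddCircle.haarAddCircle (T := 2 * Real.pi)) ℂ) (fourier n)
      = fourierBasis (T := 2 * Real.pi) n := by rw [coe_fourierBasis]
    simp only [Function.comp, map_smul, this, innerSL_apply_apply, ho n]
    by_cases h : i = n
    · subst h; simp
    · simp [h, Ne.symm h]
  have hP := hasSum_sq_fourierCoeff (ContinuousMap.toLp (E := ℂ) 2 (AddCircle.haarAddCircle (T := 2 * Real.pi)) ℂ f)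
  simp only [hco] at hP
  have hint : ∫ t, ‖(ContinuousMap.toLp (E := ℂ) 2 (AddCircle.haarAddCircle (T := 2 * Real.pi)) ℂ f) t‖ ^ 2 ∂(AddCircle.haarAddCircle (T := 2 * Real.pi))
     = ∫ t, ‖f t‖ ^ 2 ∂(AddCircle.haarAddCircle (T := 2 * Real.pi)) := by
    apply integral_congr_ae
    filter_upwards [ContinuousMap.coeFn_toLp (p := 2) (𝕜 := ℂ) (AddCircle.haarAddCircle (T := 2 * Real.pi)) f] with t ht
    rw [ht]
  rw [hint] at hP
  have hcont : Continuous (fun t => ‖f t‖ ^ 2) := by fun_prop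
  calc ∫⁻ θ in Ioo (-Real.pi) Real.pi, ENNReal.ofReal (‖F θ‖ ^ 2)
      = ∫⁻ θ in Ioc (-Real.pi) (-Real.pi + 2 * Real.pi), ENNReal.ofReal (‖f (θ : AddCircle (2 * Real.pi))‖ ^ 2) := by
        simp only [hfF]
        rw [show -Real.pi + 2 * Real.pi = Real.pi by ring]
        exact setLIntegral_congr Ioo_ae_eq_Ioc
    _ = ∫⁻ t : AddCircle (2 * Real.pi), ENNReal.ofReal (‖f t‖ ^ 2) :=
        AddCircle.lintegral_preimage (2 * Real.pi) (-Real.pi) (fun t => ENNReal.ofReal (‖f t‖ ^ 2))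
    _ = ENNReal.ofReal (2 * Real.pi) * ∫⁻ t, ENNReal.ofReal (‖f t‖ ^ 2) ∂(AddCircle.haarAddCircle (T := 2 * Real.pi)) := by
        rw [AddCircle.volume_eq_smul_haarAddCircle, lintegral_smul_measure, smul_eq_mul]
    _ = ENNReal.ofReal (2 * Real.pi) * ENNReal.ofReal (∫ t, ‖f t‖ ^ 2 ∂(AddCircle.haarAddCircle (T := 2 * Real.pi))) := by
        rw [ofReal_integral_eq_lintegral_ofReal]
        · exact hcont.integrable_of_hasCompactSupport (HasCompactSupport.of_compactSpace _)
        · exact Filter.Eventually.of_forall fun t => by positivity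
    _ = _ := by
        rw [← hP.tsum_eq, ENNReal.ofReal_tsum_of_nonneg (fun n => by positivity) hP.summable,
          ← ENNReal.tsum_mul_left]
        congr 1 with n
        rw [← ENNReal.ofReal_mul Real.two_pi_pos.le]

lemma aux_polar (r : ℝ) (G : ℂ → ℂ) (a : ℤ → ℂ) (hr : 0 < r)
    (hG : ContinuousOn G (ball (0:ℂ) 1 \ closedBall (0:ℂ) r))
    (hs : ∀ z : ℂ, r < ‖z‖ → ‖z‖ < 1 → HasSum (fun n : ℤ => a n * z ^ n) (G z))
    (S : Set ℝ) (hS : MeasurableSet S) (hS' : S ⊆ Ioo r 1) :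
    ∫⁻ z in {z : ℂ | ‖z‖ ∈ S}, ENNReal.ofReal (‖G z‖ ^ 2) =
      ∑' n : ℤ, ENNReal.ofReal (2 * Real.pi * ‖a n‖ ^ 2) *
        ∫⁻ ρ in S, ENNReal.ofReal (ρ ^ (2 * n + 1)) := by
  have hA : MeasurableSet {z : ℂ | ‖z‖ ∈ S} := measurable_norm hS
  have hsub : {z : ℂ | ‖z‖ ∈ S} ⊆ ball (0:ℂ) 1 \ closedBall (0:ℂ) r := by
    intro z hz
    have := hS' hz
    simp only [mem_sdiff, mem_ball_zero_iff, mem_closedBall_zero_iff, not_le]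
    exact ⟨this.2, this.1⟩
  have hmeas : Measurable ({z : ℂ | ‖z‖ ∈ S}.indicator fun z => ENNReal.ofReal (‖G z‖ ^ 2)) := by
    have : ContinuousOn (fun z => ENNReal.ofReal (‖G z‖ ^ 2)) {z : ℂ | ‖z‖ ∈ S} :=
      ENNReal.continuous_ofReal.comp_continuousOn ((hG.mono hsub).norm.pow 2)
    classical
    rw [← piecewise_eq_indicator]
    exact this.measurable_piecewise continuousOn_const hA
  rw [← lintegral_indicator hA, ← Complex.lintegral_comp_polarCoord_symm, polarCoord_target,
    Measure.volume_eq_prod, setLIntegral_prod]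
  swap
  · apply Measurable.aemeasurable
    simp only [smul_eq_mul]
    apply Measurable.mul (by fun_prop)
    apply hmeas.comp
    have : (fun p : ℝ × ℝ => Complex.polarCoord.symm p) =
      fun p => (p.1 : ℂ) * (Real.cos p.2 + Real.sin p.2 * Complex.I) := by
        ext p; rw [Complex.polarCoord_symm_apply]
    exact (show Continuous (fun p : ℝ × ℝ => Complex.polarCoord.symm p) by
      rw [this]; fun_prop).measurable
  have hSpos : S ⊆ Ioi 0 := fun x hx => hr.trans (hS' hx).1
  have key : ∀ ρ ∈ Ioi (0:ℝ), (∫⁻ θ in Ioo (-Real.pi) Real.pi, ENNReal.ofReal ρ •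
      {z : ℂ | ‖z‖ ∈ S}.indicator (fun z => ENNReal.ofReal (‖G z‖ ^ 2)) (Complex.polarCoord.symm (ρ, θ)))
      = S.indicator (fun ρ => ∑' n : ℤ, ENNReal.ofReal (2 * Real.pi * ‖a n‖ ^ 2) * ENNReal.ofReal (ρ ^ (2 * n + 1))) ρ := by
    intro ρ hρ
    have hρ' : 0 < ρ := hρ
    have hn : ∀ θ, ‖Complex.polarCoord.symm (ρ, θ)‖ = ρ := by
      intro θ
      rw [Complex.norm_polarCoord_symm]; exact abs_of_pos hρ'
    by_cases h : ρ ∈ S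
    · rw [indicator_of_mem h]
      have : ∀ θ, {z : ℂ | ‖z‖ ∈ S}.indicator (fun z => ENNReal.ofReal (‖G z‖ ^ 2)) (Complex.polarCoord.symm (ρ, θ)) = ENNReal.ofReal (‖G (Complex.polarCoord.symm (ρ, θ))‖ ^ 2) := by
        intro θ
        rw [indicator_of_mem]
        change _ ∈ S
        rw [hn θ]; exact h
      simp only [this, smul_eq_mul]
      rw [lintegral_const_mul' _ _ ENNReal.ofReal_ne_top]
      have hh := hS' h
      rw [aux_parseval (fun n => a n * (ρ : ℂ) ^ n) ?_ (fun θ => G (Complex.polarCoord.symm (ρ, θ))) ?_]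
      · rw [← ENNReal.tsum_mul_left]
        congr 1 with n
        rw [← ENNReal.ofReal_mul hρ'.le, ← ENNReal.ofReal_mul (by positivity)]
        congr 1
        rw [norm_mul, norm_zpow, Complex.norm_real, Real.norm_of_nonneg hρ'.le,
          zpow_add₀ hρ'.ne', two_mul n, zpow_add₀ hρ'.ne']
        simp; ring
      · exact (hs (ρ : ℂ) (by simpa [abs_of_pos hρ'] using hh.1) (by simpa [abs_of_pos hρ'] using hh.2)).summable.norm
      · intro θ
        have := hs (Complex.polarCoord.symm (ρ, θ)) (by rw [hn]; exact hh.1) (by rw [hn]; exact hh.2)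
        convert this using 2 with n
        rw [Complex.polarCoord_symm_apply]
        simp only [Complex.ofReal_cos, Complex.ofReal_sin]
        rw [← Complex.exp_mul_I, mul_zpow, ← Complex.exp_int_mul]
        ring_nf
    · rw [indicator_of_notMem h]
      have : ∀ θ, {z : ℂ | ‖z‖ ∈ S}.indicator (fun z => ENNReal.ofReal (‖G z‖ ^ 2)) (Complex.polarCoord.symm (ρ, θ)) = 0 := by
        intro θ
        rw [indicator_of_notMem]
        change ¬ (_ ∈ S)
        rw [hn θ]; exact h
      simp only [this, smul_zero, lintegral_zero]
  rw [setLIntegral_congr_fun measurableSet_Ioi key, setLIntegral_indicator hS,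
    inter_eq_left.2 hSpos, lintegral_tsum]
  · congr 1 with n
    rw [lintegral_const_mul' _ _ ENNReal.ofReal_ne_top]
  · intro n
    apply Measurable.aemeasurable
    fun_prop

lemma aux_int (k : ℤ) (s t : ℝ) (hs : 0 < s) (hst : s ≤ t) :
    ∫⁻ ρ in Ioc s t, ENNReal.ofReal (ρ ^ k) = ENNReal.ofReal (∫ ρ in s..t, ρ ^ k) := by
  rw [intervalIntegral.integral_of_le hst, ofReal_integral_eq_lintegral_ofReal]
  · have : IntervalIntegrable (fun x : ℝ => x ^ k) volume s t :=
      intervalIntegral.intervalIntegrable_zpow (Or.inr (notMem_uIcc_of_lt hs (hs.trans_le hst)))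
    exact (intervalIntegrable_iff_integrableOn_Ioc_of_le hst).1 this
  · filter_upwards [ae_restrict_mem measurableSet_Ioc] with x hx
    have : 0 < x := hs.trans hx.1
    positivity

lemma aux_mode (r l : ℝ) (hr : 0 < r) (hr4 : r ≤ 1/4) (hl : 1 < l) (hlr : l * r < l⁻¹)
    (n : ℤ) (hn : n ≠ -1) :
    ∫ ρ in (l * r)..l⁻¹, ρ ^ (2 * n + 1) ≤ 2 * l⁻¹ ^ 2 * ∫ ρ in r..1, ρ ^ (2 * n + 1) := by
  have hl0 : 0 < l := by linarith
  rw [integral_zpow (Or.inr ⟨by omega, notMem_uIcc_of_lt (by positivity) (by positivity)⟩),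
    integral_zpow (Or.inr ⟨by omega, notMem_uIcc_of_lt hr one_pos⟩)]
  have hl2 : l⁻¹ ≤ 1 := inv_le_one_of_one_le₀ hl.le
  rcases le_or_gt 0 n with h | h
  · obtain ⟨m, rfl⟩ := Int.eq_ofNat_of_zero_le h
    have e : (2 * (m:ℤ) + 1 + 1) = ((2 * m + 2 : ℕ) : ℤ) := by push_cast; ring
    simp only [e, zpow_natCast]
    push_cast
    rw [← mul_div_assoc]
    apply div_le_div_of_nonneg_right _ (by positivity)
    have h1 : l⁻¹ ^ (2 * m + 2) ≤ l⁻¹ ^ 2 := pow_le_pow_of_le_one (by positivity) hl2 (by omega)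
    have h2 : 0 < (l * r) ^ (2 * m + 2) := by positivity
    have h3 : r ^ (2 * m + 2) ≤ r ^ 2 := pow_le_pow_of_le_one hr.le (by linarith) (by omega)
    have h4 : r ^ 2 ≤ 1/2 := by nlinarith
    have h5 : 0 < l⁻¹ ^ 2 := by positivity
    rw [one_pow]
    nlinarith
  · obtain ⟨m, rfl⟩ : ∃ m : ℕ, n = -(m + 2 : ℤ) := ⟨(-n - 2).toNat, by omega⟩
    have e : (2 * (-(m + 2 : ℤ)) + 1 + 1) = -((2 * m + 2 : ℕ) : ℤ) := by push_cast; ring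
    simp only [e, zpow_neg, zpow_natCast]
    have e2 : (((2 * (-(m + 2 : ℤ)) + 1 : ℤ) : ℝ) + 1) = -(2 * m + 2) := by push_cast; ring
    rw [e2, div_neg, div_neg, ← neg_div, ← neg_div, ← mul_div_assoc]
    apply div_le_div_of_nonneg_right _ (by positivity)
    simp only [mul_pow, mul_inv, inv_pow, inv_inv, one_pow, inv_one]
    have h1 : (l ^ (2 * m + 2))⁻¹ ≤ (l ^ 2)⁻¹ := by
      apply inv_anti₀ (by positivity)
      exact pow_le_pow_right₀ hl.le (by omega)
    have h2 : 0 < l ^ (2 * m + 2) := by positivity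
    have h3 : r ^ (2 * m + 2) ≤ r ^ 2 := pow_le_pow_of_le_one hr.le (by linarith) (by omega)
    have h4 : r ^ 2 ≤ 1/2 := by nlinarith
    have h5 : 0 < (l ^ 2)⁻¹ := by positivity
    have h6 : 2 ≤ (r ^ (2 * m + 2))⁻¹ := by
      rw [le_inv_comm₀ (by norm_num) (by positivity)]; linarith
    have h7 := mul_le_mul_of_nonneg_right h1 (by linarith : 0 ≤ (r ^ (2 * m + 2))⁻¹)
    nlinarith

theorem stmt10 :
    ∃ C : ℝ, 0 < C ∧
      ∀ (r : ℝ) (G2 : ℂ → ℂ) (a : ℤ → ℂ) (lam : ℝ),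
        0 < r → r ≤ 1/4 → 1 < lam → lam * r < lam⁻¹ →
        DifferentiableOn ℂ G2 (ball (0:ℂ) 1 \ closedBall (0:ℂ) r) →
        (∀ z : ℂ, r < ‖z‖ → ‖z‖ < 1 → HasSum (fun n : ℤ => a n * z ^ n) (G2 z)) →
        (∫⁻ z in ball (0:ℂ) lam⁻¹ \ ball (0:ℂ) (lam * r), ENNReal.ofReal (‖G2 z‖ ^ 2))
          ≤ ENNReal.ofReal (C * ‖a (-1)‖ ^ 2 * |Real.log r|) +
            ENNReal.ofReal (C * lam⁻¹ ^ 2) *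
              ∫⁻ z in ball (0:ℂ) 1 \ closedBall (0:ℂ) r,
                ENNReal.ofReal (‖G2 z‖ ^ 2) := by
  refine ⟨2 * Real.pi, Real.two_pi_pos, ?_⟩
  intro r G a l hr hr4 hl hlr hG hs
  have hl0 : 0 < l := by linarith
  have e1 : ball (0:ℂ) l⁻¹ \ ball (0:ℂ) (l * r) = {z : ℂ | ‖z‖ ∈ Ico (l * r) l⁻¹} := by
    ext z; simp [and_comm]
  have e2 : ball (0:ℂ) 1 \ closedBall (0:ℂ) r = {z : ℂ | ‖z‖ ∈ Ioo r 1} := by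
    ext z; simp [and_comm]
  have hl2 : l⁻¹ < 1 := inv_lt_one_of_one_lt₀ hl
  have hS : Ico (l * r) l⁻¹ ⊆ Ioo r 1 := fun x hx =>
    ⟨lt_of_lt_of_le (by nlinarith) hx.1, hx.2.trans hl2⟩
  have p1 := aux_polar r G a hr hG.continuousOn hs _ measurableSet_Ico hS
  have p2 := aux_polar r G a hr hG.continuousOn hs _ measurableSet_Ioo subset_rfl
  rw [e1, e2, p1, p2, ← ENNReal.tsum_mul_left]
  have i1 : ∀ k : ℤ, ∫⁻ ρ in Ico (l * r) l⁻¹, ENNReal.ofReal (ρ ^ k) =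
      ENNReal.ofReal (∫ ρ in (l * r)..l⁻¹, ρ ^ k) := fun k => by
    rw [← aux_int k _ _ (by positivity) hlr.le]
    exact setLIntegral_congr Ico_ae_eq_Ioc
  have i2 : ∀ k : ℤ, ∫⁻ ρ in Ioo r 1, ENNReal.ofReal (ρ ^ k) =
      ENNReal.ofReal (∫ ρ in r..1, ρ ^ k) := fun k => by
    rw [← aux_int k _ _ hr (by linarith)]
    exact setLIntegral_congr Ioo_ae_eq_Ioc
  simp only [i1, i2]
  rw [← tsum_ite_eq (-1 : ℤ) (fun _ => ENNReal.ofReal (2 * Real.pi * ‖a (-1)‖ ^ 2 * |Real.log r|)),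
    ← ENNReal.tsum_add]
  apply ENNReal.tsum_le_tsum
  intro n
  by_cases h : n = -1
  · subst h
    rw [if_pos rfl]
    refine le_trans ?_ le_self_add
    rw [← ENNReal.ofReal_mul (by positivity)]
    apply ENNReal.ofReal_le_ofReal
    apply mul_le_mul_of_nonneg_left _ (by positivity)
    norm_num only
    simp only [zpow_neg, zpow_one]
    rw [integral_inv_of_pos (by positivity) (by positivity),
      abs_of_nonpos (Real.log_nonpos hr.le (by linarith)), ← Real.log_inv]
    apply Real.log_le_log (by positivity)
    rw [div_le_iff₀ (by positivity)]
    have : r⁻¹ * (l * r) = l := by field_simp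
    rw [this]; linarith
  · rw [if_neg h, zero_add, mul_left_comm]
    gcongr
    rw [← ENNReal.ofReal_mul (by positivity)]
    apply ENNReal.ofReal_le_ofReal
    refine (aux_mode r l hr hr4 hl hlr n h).trans ?_
    have : 0 ≤ ∫ ρ in r..1, ρ ^ (2 * n + 1) := by
      apply intervalIntegral.integral_nonneg (by linarith)
      intro x hx
      have : 0 < x := hr.trans_le hx.1
      positivity
    apply mul_le_mul_of_nonneg_right _ this
    apply mul_le_mul_of_nonneg_right _ (by positivity)
    linarith [Real.pi_gt_three]
end

section
/- There exists a constant $C > 0$ such that for every $f \in W^{1,1}(B_1)$, where $B_1 \subset \mathbb{R}^2$ is the unit disk, one has $f \in L^{2,1}(B_1)$ with $\|f\|_{L^{2,1}(B_1)} \le C \|f\|_{W^{1,1}(B_1)}$. -/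
open MeasureTheory Metric Set ENNReal

/-- Lorentz `L^{2,1}` norm of a function on `U ⊆ ℂ`. -/
noncomputable def lorentz21 (U : Set ℂ) (f : ℂ → ℝ) : ℝ≥0∞ :=
  ∫⁻ t in Set.Ioi (0 : ℝ), (volume {z : ℂ | z ∈ U ∧ t ≤ ‖f z‖}) ^ (1/2 : ℝ)

/-- One-dimensional estimate on an interval of length between `1/5` and `2`. -/
lemma one_dim (u u' : ℝ → ℝ) (r : ℝ) (hr : 1/10 ≤ r) (hr1 : r ≤ 1)
    (hu : ∀ x ∈ Ioo (-r) r, HasDerivAt u (u' x) x) (x : ℝ) (hx : x ∈ Ioo (-r) r) :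
    ENNReal.ofReal |u x| ≤
      10 * ∫⁻ y in Ioo (-r) r, (ENNReal.ofReal |u y| + ENNReal.ofReal |u' y|) := by
  set A := ∫⁻ y in Ioo (-r) r, ENNReal.ofReal |u' y| with hA
  have hum : AEMeasurable (fun y => ENNReal.ofReal |u y|) (volume.restrict (Ioo (-r) r)) := by
    have : ContinuousOn u (Ioo (-r) r) := fun y hy => (hu y hy).continuousAt.continuousWithinAt
    exact (this.aemeasurable measurableSet_Ioo).norm.ennreal_ofReal
  have hu'm : AEMeasurable u' (volume.restrict (Ioo (-r) r)) := by
    refine (measurable_deriv u).aemeasurable.congr ?_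
    filter_upwards [ae_restrict_mem measurableSet_Ioo] with y hy
    exact (hu y hy).deriv
  rw [lintegral_add_left' hum]
  set U := ∫⁻ y in Ioo (-r) r, ENNReal.ofReal |u y| with hU
  by_cases hAt : A = ∞
  · change _ ≤ 10 * (U + A)
    simp [hAt]
  have h_int : IntegrableOn u' (Ioo (-r) r) := by
    refine ⟨hu'm.aestronglyMeasurable, ?_⟩
    rw [hasFiniteIntegral_iff_norm]
    exact lt_top_iff_ne_top.2 hAt
  have key : ∀ y ∈ Ioo (-r) r, ENNReal.ofReal |u x| ≤ ENNReal.ofReal |u y| + A := by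
    intro y hy
    have hsub : uIcc y x ⊆ Ioo (-r) r := (ordConnected_Ioo).uIcc_subset hy hx
    have hi : IntervalIntegrable u' volume y x :=
      (h_int.mono_set hsub).intervalIntegrable
    have h := intervalIntegral.integral_eq_sub_of_hasDerivAt (fun z hz => hu z (hsub hz)) hi
    have h2 : |u x - u y| ≤ ∫ z in Ioo (-r) r, ‖u' z‖ := by
      rw [← h]
      refine (Real.norm_eq_abs _).symm.le.trans ?_
      refine (intervalIntegral.norm_integral_le_integral_norm_uIoc).trans ?_
      exact setIntegral_mono_set h_int.norm (Filter.Eventually.of_forall fun _ => norm_nonneg _)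
        (uIoc_subset_uIcc.trans hsub).eventuallyLE
    have h3 : A = ENNReal.ofReal (∫ z in Ioo (-r) r, ‖u' z‖) := by
      rw [ofReal_integral_eq_lintegral_ofReal h_int.norm
        (Filter.Eventually.of_forall fun _ => norm_nonneg _)]
      rfl
    rw [h3, ← ENNReal.ofReal_add (abs_nonneg _)
      (integral_nonneg fun _ => norm_nonneg _)]
    apply ENNReal.ofReal_le_ofReal
    have := abs_sub_abs_le_abs_sub (u x) (u y)
    linarith
  have hv : volume (Ioo (-r) r) = ENNReal.ofReal (2 * r) := by
    rw [Real.volume_Ioo]; congr 1; ring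
  have h1 : ENNReal.ofReal |u x| * ENNReal.ofReal (2 * r) ≤ U + A * ENNReal.ofReal (2 * r) := by
    rw [← hv, ← setLIntegral_const, ← setLIntegral_const, ← lintegral_add_left' hum]
    exact setLIntegral_mono' measurableSet_Ioo key
  have h5 : (1 : ℝ≥0∞) ≤ 5 * ENNReal.ofReal (2 * r) := by
    rw [← ENNReal.ofReal_ofNat 5, ← ENNReal.ofReal_mul (by norm_num), ← ENNReal.ofReal_one]
    exact ENNReal.ofReal_le_ofReal (by linarith)
  have h6 : ENNReal.ofReal (2 * r) ≤ 2 := by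
    rw [← ENNReal.ofReal_ofNat 2]
    exact ENNReal.ofReal_le_ofReal (by simpa using hr1)
  calc ENNReal.ofReal |u x| ≤ ENNReal.ofReal |u x| * (5 * ENNReal.ofReal (2 * r)) :=
        le_mul_of_one_le_right (zero_le) h5
    _ = 5 * (ENNReal.ofReal |u x| * ENNReal.ofReal (2 * r)) := by ring
    _ ≤ 5 * (U + A * 2) := by gcongr; exact h1.trans (by gcongr)
    _ = 5 * U + 10 * A := by ring
    _ ≤ 10 * U + 10 * A := by gcongr; norm_num
    _ = 10 * (U + A) := by ring

/-- Layer cake inequality. -/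
lemma layer (G : ℝ → ℝ≥0∞) (hG : Measurable G) :
    ∫⁻ t in Ioi (0:ℝ), volume {y | ENNReal.ofReal t ≤ G y} ≤ ∫⁻ y, G y := by
  by_cases h : ∫⁻ y, G y = ∞
  · simp [h]
  have hfin := ae_lt_top hG h
  have h1 := lintegral_eq_lintegral_meas_le (volume : Measure ℝ) (f := fun y => (G y).toReal)
    (Filter.Eventually.of_forall fun _ => ENNReal.toReal_nonneg) hG.ennreal_toReal.aemeasurable
  have h2 : ∫⁻ y, ENNReal.ofReal (G y).toReal = ∫⁻ y, G y := by
    refine lintegral_congr_ae ?_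
    filter_upwards [hfin] with y hy using ENNReal.ofReal_toReal hy.ne
  rw [← h2, h1]
  refine lintegral_mono fun t => measure_mono_ae ?_
  filter_upwards [hfin] with y hy hty
  exact (ENNReal.ofReal_le_iff_le_toReal hy.ne).1 hty

/-- The part of the level set where both coordinate chords are long. -/
def coreSet (f : ℂ → ℝ) (t : ℝ) : Set ℂ :=
  {z | z ∈ ball (0:ℂ) 1 ∧ |z.re| ≤ 99/100 ∧ |z.im| ≤ 99/100 ∧ t ≤ ‖f z‖}

lemma mem_ball_iff (x y : ℝ) : (⟨x, y⟩ : ℂ) ∈ ball (0:ℂ) 1 ↔ x ^ 2 + y ^ 2 < 1 := by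
  rw [mem_ball_zero_iff, ← sq_lt_one_iff₀ (norm_nonneg _), ← Complex.normSq_eq_norm_sq,
    Complex.normSq_mk, sq, sq]

lemma slice (y : ℝ) (hy : |y| ≤ 99/100) : ∃ r : ℝ, 1/10 ≤ r ∧ r ≤ 1 ∧
    ∀ x : ℝ, x ∈ Ioo (-r) r ↔ x ^ 2 + y ^ 2 < 1 := by
  have hy2 : y ^ 2 ≤ (99/100) ^ 2 := sq_le_sq' (by linarith [abs_le.1 hy]) (abs_le.1 hy).2
  refine ⟨√(1 - y ^ 2), Real.le_sqrt_of_sq_le (by linarith), ?_, fun x => ?_⟩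
  · rw [Real.sqrt_le_left zero_le_one]; nlinarith [sq_nonneg y]
  · rw [mem_Ioo, ← abs_lt, Real.lt_sqrt (abs_nonneg _), sq_abs]
    constructor <;> intro h <;> linarith

/-- The density `|f| + |∇f|` on the disk. -/
noncomputable def dens (f : ℂ → ℝ) : ℂ → ℝ≥0∞ :=
  (ball (0:ℂ) 1).indicator fun z => ENNReal.ofReal |f z| + ENNReal.ofReal ‖fderiv ℝ f z‖

lemma dens_meas (f : ℂ → ℝ) (hf : ∀ x ∈ ball (0:ℂ) 1, DifferentiableAt ℝ f x) :
    Measurable (dens f) := by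
  have h1 : Measurable ((ball (0:ℂ) 1).indicator f) := by
    classical
    have hc : ContinuousOn f (ball (0:ℂ) 1) := fun z hz => (hf z hz).continuousAt.continuousWithinAt
    exact hc.measurable_piecewise (continuousOn_const (c := (0:ℝ))) measurableSet_ball
  have h2 : dens f = (ball (0:ℂ) 1).indicator fun z =>
      ENNReal.ofReal |(ball (0:ℂ) 1).indicator f z| + ENNReal.ofReal ‖fderiv ℝ f z‖ := by
    ext z
    by_cases hz : z ∈ ball (0:ℂ) 1 <;> simp only [dens, indicator_of_mem, indicator_of_notMem, hz, not_false_eq_true]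
  rw [h2]
  exact Measurable.indicator (h1.norm.ennreal_ofReal.add
    (measurable_fderiv ℝ f).norm.ennreal_ofReal) measurableSet_ball

lemma horiz (f : ℂ → ℝ) (hf : ∀ x ∈ ball (0:ℂ) 1, DifferentiableAt ℝ f x)
    (x y : ℝ) (hy : |y| ≤ 99/100) (hz : (⟨x, y⟩ : ℂ) ∈ ball (0:ℂ) 1) :
    ENNReal.ofReal |f ⟨x, y⟩| ≤ 10 * ∫⁻ s, dens f ⟨s, y⟩ := by
  obtain ⟨r, hr, hr1, hI⟩ := slice y hy
  have hI' : ∀ s, s ∈ Ioo (-r) r ↔ (⟨s, y⟩ : ℂ) ∈ ball (0:ℂ) 1 := fun s => by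
    rw [hI, mem_ball_iff]
  have hd : ∀ s : ℝ, HasDerivAt (fun s : ℝ => (⟨s, y⟩ : ℂ)) 1 s := by
    intro s
    have := (Complex.ofRealCLM.hasDerivAt (x := s)).add_const (⟨0, y⟩ : ℂ)
    have he : (fun s : ℝ => (⟨s, y⟩ : ℂ)) = fun s : ℝ => Complex.ofRealCLM s + (⟨0, y⟩ : ℂ) := by
      funext s; apply Complex.ext <;> simp
    rw [he]
    simpa using this
  have h := one_dim (fun s => f ⟨s, y⟩) (fun s => fderiv ℝ f ⟨s, y⟩ 1) r hr hr1
    (fun s hs => (hf _ ((hI' s).1 hs)).hasFDerivAt.comp_hasDerivAt s (hd s)) x ((hI' x).2 hz)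
  refine h.trans (mul_le_mul' le_rfl ?_)
  rw [← lintegral_indicator measurableSet_Ioo]
  refine lintegral_mono fun s => ?_
  by_cases hs : s ∈ Ioo (-r) r
  · simp only [dens, indicator_of_mem hs, indicator_of_mem ((hI' s).1 hs)]
    gcongr
    simpa using (fderiv ℝ f ⟨s, y⟩).le_opNorm 1
  · simp [indicator_of_notMem hs]

lemma vert (f : ℂ → ℝ) (hf : ∀ x ∈ ball (0:ℂ) 1, DifferentiableAt ℝ f x)
    (x y : ℝ) (hx : |x| ≤ 99/100) (hz : (⟨x, y⟩ : ℂ) ∈ ball (0:ℂ) 1) :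
    ENNReal.ofReal |f ⟨x, y⟩| ≤ 10 * ∫⁻ s, dens f ⟨x, s⟩ := by
  obtain ⟨r, hr, hr1, hI⟩ := slice x hx
  have hI' : ∀ s, s ∈ Ioo (-r) r ↔ (⟨x, s⟩ : ℂ) ∈ ball (0:ℂ) 1 := fun s => by
    rw [hI, mem_ball_iff, add_comm]
  have hd : ∀ s : ℝ, HasDerivAt (fun s : ℝ => (⟨x, s⟩ : ℂ)) Complex.I s := by
    intro s
    have := ((Complex.ofRealCLM.hasDerivAt (x := s)).mul_const Complex.I).add_const (x : ℂ)
    have he : (fun s : ℝ => (⟨x, s⟩ : ℂ)) = fun s : ℝ => Complex.ofRealCLM s * Complex.I + (x : ℂ) := by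
      funext s; apply Complex.ext <;> simp
    rw [he]
    simpa using this
  have h := one_dim (fun s => f ⟨x, s⟩) (fun s => fderiv ℝ f ⟨x, s⟩ Complex.I) r hr hr1
    (fun s hs => (hf _ ((hI' s).1 hs)).hasFDerivAt.comp_hasDerivAt s (hd s)) y ((hI' y).2 hz)
  refine h.trans (mul_le_mul' le_rfl ?_)
  rw [← lintegral_indicator measurableSet_Ioo]
  refine lintegral_mono fun s => ?_
  by_cases hs : s ∈ Ioo (-r) r
  · simp only [dens, indicator_of_mem hs, indicator_of_mem ((hI' s).1 hs)]
    gcongr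
    simpa using (fderiv ℝ f ⟨x, s⟩).le_opNorm Complex.I
  · simp [indicator_of_notMem hs]

lemma sqrt_mul_le (a b : ℝ≥0∞) : (a * b) ^ (1/2 : ℝ) ≤ a + b := by
  calc (a * b) ^ (1/2 : ℝ) ≤ ((a + b) ^ (2:ℝ)) ^ (1/2 : ℝ) := by
        gcongr
        rw [ENNReal.rpow_two, sq]
        exact mul_le_mul' le_self_add le_add_self
    _ = a + b := by rw [← ENNReal.rpow_mul]; norm_num

lemma core (f : ℂ → ℝ) (hf : ∀ x ∈ ball (0:ℂ) 1, DifferentiableAt ℝ f x) :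
    ∫⁻ t in Ioi (0:ℝ), (volume (coreSet f t)) ^ (1/2 : ℝ) ≤ 20 * ∫⁻ z, dens f z := by
  have hm := dens_meas f hf
  have hp := Complex.volume_preserving_equiv_real_prod
  have hm2 : Measurable fun p : ℝ × ℝ => dens f ⟨p.1, p.2⟩ :=
    hm.comp Complex.measurableEquivRealProd.symm.measurable
  set G1 : ℝ → ℝ≥0∞ := fun y => 10 * ∫⁻ s, dens f ⟨s, y⟩ with hG1
  set G2 : ℝ → ℝ≥0∞ := fun x => 10 * ∫⁻ s, dens f ⟨x, s⟩ with hG2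
  have h_int : ∫⁻ z, dens f z = ∫⁻ p : ℝ × ℝ, dens f ⟨p.1, p.2⟩ :=
    ((hp.symm Complex.measurableEquivRealProd).lintegral_comp hm).symm
  have m1 : Measurable fun y => ∫⁻ s, dens f ⟨s, y⟩ := hm2.lintegral_prod_left'
  have m2 : Measurable fun x => ∫⁻ s, dens f ⟨x, s⟩ := hm2.lintegral_prod_right'
  have i1 : ∫⁻ y, G1 y = 10 * ∫⁻ z, dens f z := by
    rw [hG1, lintegral_const_mul _ m1, h_int, Measure.volume_eq_prod,
      lintegral_prod_symm _ hm2.aemeasurable]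
  have i2 : ∫⁻ x, G2 x = 10 * ∫⁻ z, dens f z := by
    rw [hG2, lintegral_const_mul _ m2, h_int, Measure.volume_eq_prod,
      lintegral_prod _ hm2.aemeasurable]
  have hsub : ∀ t, volume (coreSet f t) ≤
      volume {x | ENNReal.ofReal t ≤ G2 x} * volume {y | ENNReal.ofReal t ≤ G1 y} := by
    intro t
    rw [← Measure.prod_prod, ← Measure.volume_eq_prod, ← hp.measure_preimage_equiv]
    refine measure_mono ?_
    rintro ⟨x, y⟩ ⟨hz, hx, hy, ht⟩
    exact ⟨(ENNReal.ofReal_le_ofReal ht).trans (vert f hf x y hx hz),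
      (ENNReal.ofReal_le_ofReal ht).trans (horiz f hf x y hy hz)⟩
  have hmono : Measurable fun t : ℝ => volume {x | ENNReal.ofReal t ≤ G2 x} :=
    Antitone.measurable fun s t hst => measure_mono fun x hx =>
      (ENNReal.ofReal_le_ofReal hst).trans hx
  calc ∫⁻ t in Ioi (0:ℝ), (volume (coreSet f t)) ^ (1/2 : ℝ)
      ≤ ∫⁻ t in Ioi (0:ℝ), (volume {x | ENNReal.ofReal t ≤ G2 x}
          + volume {y | ENNReal.ofReal t ≤ G1 y}) := by
        refine lintegral_mono fun t => ?_
        refine le_trans ?_ (sqrt_mul_le _ _)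
        exact ENNReal.rpow_le_rpow (hsub t) (by norm_num)
    _ = _ := lintegral_add_left hmono _
    _ ≤ (∫⁻ x, G2 x) + ∫⁻ y, G1 y :=
        add_le_add (layer _ (m2.const_mul _)) (layer _ (m1.const_mul _))
    _ = 20 * ∫⁻ z, dens f z := by rw [i1, i2]; ring

/-- A rational rotation of the plane. -/
noncomputable def rotR : ℂ ≃ₗᵢ[ℝ] ℂ :=
  rotation ⟨⟨3/5, 4/5⟩, by
    rw [Submonoid.unitSphere, ← SetLike.mem_coe]
    simp [Complex.norm_def, Complex.normSq_mk]; norm_num⟩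

lemma rotR_apply (z : ℂ) : rotR z = ⟨3/5, 4/5⟩ * z := by
  rfl

lemma rotR_ball (z : ℂ) : rotR z ∈ ball (0:ℂ) 1 ↔ z ∈ ball (0:ℂ) 1 := by
  simp

lemma cover (f : ℂ → ℝ) (t : ℝ) : {z : ℂ | z ∈ ball (0:ℂ) 1 ∧ t ≤ ‖f z‖} ⊆
    coreSet f t ∪ rotR.symm ⁻¹' coreSet (f ∘ rotR) t := by
  intro z hz
  obtain ⟨w, rfl⟩ := rotR.surjective z
  obtain ⟨hb, ht⟩ := hz
  by_cases h : |(rotR w).re| ≤ 99/100 ∧ |(rotR w).im| ≤ 99/100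
  · exact Or.inl ⟨hb, h.1, h.2, ht⟩
  · right
    rw [mem_preimage, LinearIsometryEquiv.symm_apply_apply]
    rw [rotR_ball] at hb
    obtain ⟨x, y⟩ := w
    have hxy := (mem_ball_iff x y).1 hb
    refine ⟨hb, ?_, ?_, ht⟩
    all_goals
      by_contra! hc
      apply h
      rw [rotR_apply]
      simp only [Complex.mul_re, Complex.mul_im] at *
      have ha := sq_abs x
      have hb' := sq_abs y
      have hx0 := abs_nonneg x
      have hy0 := abs_nonneg y
      constructor
    · have : |y| ≤ 15/100 := by nlinarith
      have : |x| ≤ 1 := by nlinarith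
      rw [abs_le] at *; constructor <;> linarith
    · have : |y| ≤ 15/100 := by nlinarith
      have : |x| ≤ 1 := by nlinarith
      rw [abs_le] at *; constructor <;> linarith
    · have : |x| ≤ 15/100 := by nlinarith
      have : |y| ≤ 1 := by nlinarith
      rw [abs_le] at *; constructor <;> linarith
    · have : |x| ≤ 15/100 := by nlinarith
      have : |y| ≤ 1 := by nlinarith
      rw [abs_le] at *; constructor <;> linarith

lemma dens_rot (f : ℂ → ℝ) (hf : ∀ x ∈ ball (0:ℂ) 1, DifferentiableAt ℝ f x) :
    ∫⁻ z, dens (f ∘ rotR) z = ∫⁻ z, dens f z := by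
  rw [← rotR.measurePreserving.lintegral_comp (dens_meas f hf)]
  congr 1
  ext z
  by_cases hz : z ∈ ball (0:ℂ) 1
  · have hz' := (rotR_ball z).2 hz
    simp only [dens, indicator_of_mem hz, indicator_of_mem hz']
    have : fderiv ℝ (f ∘ rotR) z = (fderiv ℝ f (rotR z)).comp
        (rotR.toContinuousLinearEquiv : ℂ →L[ℝ] ℂ) :=
      rotR.toContinuousLinearEquiv.comp_right_fderiv
    rw [this]
    have h2 := ContinuousLinearMap.opNorm_comp_linearIsometryEquiv (fderiv ℝ f (rotR z)) rotR
    congr 2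
  · have hz' := (rotR_ball z).not.2 hz
    simp only [dens, indicator_of_notMem hz, indicator_of_notMem hz']

/-- The embedding `W^{1,1}(B₁) ⊆ L^{2,1}(B₁)` in dimension two:
`‖f‖_{L^{2,1}(B₁)} ≤ C(‖f‖_{L¹(B₁)} + ‖∇f‖_{L¹(B₁)}) = C‖f‖_{W^{1,1}(B₁)}`. -/
theorem stmt13 :
    ∃ C : ℝ, 0 < C ∧
      ∀ (f : ℂ → ℝ) (f' : ℂ → ℂ →L[ℝ] ℝ),
        (∀ x ∈ ball (0:ℂ) 1, HasFDerivAt f (f' x) x) →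
        IntegrableOn f (ball (0:ℂ) 1) volume →
        IntegrableOn (fun x => ‖f' x‖) (ball (0:ℂ) 1) volume →
        lorentz21 (ball (0:ℂ) 1) f
          ≤ ENNReal.ofReal C *
            ((∫⁻ x in ball (0:ℂ) 1, ENNReal.ofReal |f x|) +
              ∫⁻ x in ball (0:ℂ) 1, ENNReal.ofReal ‖f' x‖) := by
  refine ⟨40, by norm_num, fun f f' hff' hfi _ => ?_⟩
  have hf : ∀ x ∈ ball (0:ℂ) 1, DifferentiableAt ℝ f x := fun x hx => (hff' x hx).differentiableAt
  have hfr : ∀ x ∈ ball (0:ℂ) 1, DifferentiableAt ℝ (f ∘ rotR) x := fun x hx =>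
    (hf _ ((rotR_ball x).2 hx)).comp x rotR.toContinuousLinearEquiv.differentiableAt
  have hN : ∫⁻ z, dens f z = (∫⁻ x in ball (0:ℂ) 1, ENNReal.ofReal |f x|) +
      ∫⁻ x in ball (0:ℂ) 1, ENNReal.ofReal ‖f' x‖ := by
    have hfm : AEMeasurable (fun x => ENNReal.ofReal |f x|) (volume.restrict (ball (0:ℂ) 1)) :=
      hfi.aestronglyMeasurable.aemeasurable.norm.ennreal_ofReal
    rw [← lintegral_add_left' hfm, dens, lintegral_indicator measurableSet_ball]
    refine setLIntegral_congr_fun measurableSet_ball fun x hx => ?_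
    simp only [(hff' x hx).fderiv]
  rw [← hN]
  have hmono : Measurable fun t : ℝ => (volume (coreSet f t)) ^ (1/2 : ℝ) :=
    Antitone.measurable fun s t hst => ENNReal.rpow_le_rpow
      (measure_mono fun z hz => ⟨hz.1, hz.2.1, hz.2.2.1, hst.trans hz.2.2.2⟩) (by norm_num)
  have hvol : ∀ S : Set ℂ, volume (rotR.symm ⁻¹' S) = volume S := fun S =>
    rotR.symm.measurePreserving.measure_preimage_emb
      rotR.symm.toHomeomorph.measurableEmbedding S
  calc lorentz21 (ball (0:ℂ) 1) f
      ≤ ∫⁻ t in Ioi (0:ℝ), ((volume (coreSet f t)) ^ (1/2 : ℝ) +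
          (volume (coreSet (f ∘ rotR) t)) ^ (1/2 : ℝ)) := by
        refine lintegral_mono fun t => ?_
        refine le_trans ?_ (ENNReal.rpow_add_le_add_rpow _ _ (by norm_num) (by norm_num))
        refine ENNReal.rpow_le_rpow ?_ (by norm_num)
        refine (measure_mono (cover f t)).trans ((measure_union_le _ _).trans ?_)
        rw [hvol]
    _ = _ := lintegral_add_left hmono _
    _ ≤ (20 * ∫⁻ z, dens f z) + 20 * ∫⁻ z, dens (f ∘ rotR) z := add_le_add (core f hf) (core _ hfr)
    _ = 40 * ∫⁻ z, dens f z := by rw [dens_rot f hf]; ring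
    _ = _ := by norm_num
end
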